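/- arXiv:1903.05863 — 2 statements merged into one kernel-verified Lean document; each statement's English description precedes it below -/
import Mathlib

section
/- Let H ∈ (0,1/2). For all s, t > 0, ∫_0^{min(s,t)} K_H(t,u) K_H(s,u) du = (1/2) ( t^{2H} + s^{2H} − |t − s|^{2H} ). -/
open MeasureTheory intervalIntegral

/-- The normalizing constant `c_H = √(2H / ((1-2H) B(1-2H, H+1/2)))`, where the Beta function is
expressed via Gamma functions: `B(a,b) = Γ(a)Γ(b)/Γ(a+b)`. -/
noncomputable def cH (H : ℝ) : ℝ :=
  Real.sqrt (2 * H /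
    ((1 - 2 * H) * (Real.Gamma (1 - 2 * H) * Real.Gamma (H + 1 / 2) /
      Real.Gamma ((1 - 2 * H) + (H + 1 / 2)))))

/-- The fractional Brownian kernel
`K_H(t,s) = c_H [ (t/s)^{H-1/2}(t-s)^{H-1/2} + (1/2-H) s^{1/2-H} ∫_s^t u^{H-3/2}(u-s)^{H-1/2} du ]`. -/
noncomputable def KH (H t s : ℝ) : ℝ :=
  cH H * ((t / s) ^ (H - 1 / 2) * (t - s) ^ (H - 1 / 2) +
    (1 / 2 - H) * s ^ (1 / 2 - H) * ∫ u in s..t, u ^ (H - 3 / 2) * (u - s) ^ (H - 1 / 2))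

open Set Filter Topology ProbabilityTheory
open scoped ENNReal

namespace FractionalKernel

lemma lintegral_Ioo_zero_one_beta {p q : ℝ} (hp : 0 < p) (hq : 0 < q) :
    ∫⁻ x in Ioo (0 : ℝ) 1, ENNReal.ofReal (x ^ (p - 1) * (1 - x) ^ (q - 1)) =
      ENNReal.ofReal (beta p q) := by
  have hB := beta_pos hp hq
  have h := lintegral_betaPDF_eq_one hp hq
  rw [lintegral_betaPDF] at h
  simp_rw [mul_assoc, ENNReal.ofReal_mul (one_div_pos.2 hB).le] at h
  rw [lintegral_const_mul' _ _ ENNReal.ofReal_ne_top] at h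
  have h1 : ENNReal.ofReal (beta p q) * ENNReal.ofReal (1 / beta p q) = 1 := by
    rw [← ENNReal.ofReal_mul hB.le, mul_one_div_cancel hB.ne', ENNReal.ofReal_one]
  rw [← one_mul (∫⁻ _ in _, _), ← h1, mul_assoc, h, mul_one]

/-- Change of variables in the Beta integral. -/
lemma lintegral_eq_beta_of_image {p q C : ℝ} {S : Set ℝ} {f f' h : ℝ → ℝ} (hp : 0 < p)
    (hq : 0 < q) (hC : 0 < C) (hS : MeasurableSet S) (hf : ∀ x ∈ S, HasDerivAt f (f' x) x)
    (hinj : InjOn f S) (himg : f '' S = Ioo 0 1)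
    (heq : ∀ x ∈ S, |f' x| * (f x ^ (p - 1) * (1 - f x) ^ (q - 1)) = C * h x) :
    ∫⁻ x in S, ENNReal.ofReal (h x) = ENNReal.ofReal (beta p q / C) := by
  have key := lintegral_image_eq_lintegral_abs_deriv_mul hS
    (fun x hx => (hf x hx).hasDerivWithinAt) hinj
    (fun x => ENNReal.ofReal (x ^ (p - 1) * (1 - x) ^ (q - 1)))
  rw [himg, lintegral_Ioo_zero_one_beta hp hq] at key
  rw [div_eq_inv_mul, ENNReal.ofReal_mul (inv_pos.2 hC).le, key,
    ← lintegral_const_mul' _ _ ENNReal.ofReal_ne_top]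
  refine setLIntegral_congr_fun hS fun x hx => ?_
  rw [← ENNReal.ofReal_mul (abs_nonneg _), heq x hx, ← ENNReal.ofReal_mul (inv_pos.2 hC).le,
    inv_mul_cancel_left₀ hC.ne']

lemma lintegral_Ioo_beta {p q a b : ℝ} (hp : 0 < p) (hq : 0 < q) (hab : a < b) :
    ∫⁻ x in Ioo a b, ENNReal.ofReal ((x - a) ^ (p - 1) * (b - x) ^ (q - 1)) =
      ENNReal.ofReal (beta p q / (b - a) ^ (1 - p - q)) := by
  have hba : 0 < b - a := sub_pos.2 hab
  refine lintegral_eq_beta_of_image (f := fun x => (x - a) / (b - a)) (f' := fun _ => 1 / (b - a))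
    hp hq (Real.rpow_pos_of_pos hba _) measurableSet_Ioo
    (fun x _ => ((hasDerivAt_id x).sub_const a).div_const _) ?_ ?_ ?_
  · intro x _ y _ hxy
    simpa [div_left_inj' hba.ne'] using hxy
  · ext z
    simp only [mem_image, mem_Ioo]
    constructor
    · rintro ⟨x, ⟨h1, h2⟩, rfl⟩
      exact ⟨div_pos (by linarith) hba, (div_lt_one hba).2 (by linarith)⟩
    · rintro ⟨h1, h2⟩
      exact ⟨a + (b - a) * z, ⟨by nlinarith, by nlinarith⟩, by field_simp; ring⟩
  · rintro x ⟨h1, h2⟩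
    have e : 1 - (x - a) / (b - a) = (b - x) / (b - a) := by field_simp; ring
    rw [e, abs_of_pos (by positivity), Real.div_rpow (by linarith) hba.le,
      Real.div_rpow (by linarith) hba.le]
    have e2 : (b - a) ^ (1 - p - q) * ((b - a) ^ (p - 1) * (b - a) ^ (q - 1) * (b - a)) = 1 := by
      nth_rewrite 4 [← Real.rpow_one (b - a)]
      rw [← Real.rpow_add hba, ← Real.rpow_add hba, ← Real.rpow_add hba]
      ring_nf
      exact Real.rpow_zero _
    have := Real.rpow_pos_of_pos hba (p - 1)
    have := Real.rpow_pos_of_pos hba (q - 1)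
    field_simp
    linear_combination -e2

/-- A Beta integral with a third linear factor, evaluated by a Möbius substitution. -/
lemma lintegral_Ioo_beta_mobius {p q u v : ℝ} (hp : 0 < p) (hq : 0 < q) (hu : 0 < u)
    (huv : u < v) :
    ∫⁻ y in Ioo 0 u, ENNReal.ofReal (y ^ (p - 1) * (v - y) ^ (-p - q) * (u - y) ^ (q - 1)) =
      ENNReal.ofReal (beta p q / (u ^ (1 - p - q) * v ^ q * (v - u) ^ p)) := by
  have hv : 0 < v := hu.trans huv
  have hvu : 0 < v - u := sub_pos.2 huv
  refine lintegral_eq_beta_of_image (f := fun y => y * (v - u) / (u * (v - y)))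
    (f' := fun y => v * (v - u) / (u * (v - y) ^ 2)) hp hq (by positivity) measurableSet_Ioo
    ?_ ?_ ?_ ?_
  · rintro y ⟨h1, h2⟩
    have hvy : 0 < v - y := by linarith
    convert! ((hasDerivAt_id y).mul_const (v - u)).div
      (((hasDerivAt_id y).const_sub v).const_mul u) (by positivity) using 1
    simp only [id]
    field_simp
    ring
  · rintro x ⟨_, hx⟩ y ⟨_, hy⟩ hxy
    have hvx : 0 < v - x := by linarith
    have hvy : 0 < v - y := by linarith
    dsimp only at hxy
    field_simp at hxy
    have : v * (x - y) = 0 := by linear_combination hxy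
    rcases mul_eq_zero.1 this with h | h
    · exact absurd h hv.ne'
    · linarith
  · ext z
    simp only [mem_image, mem_Ioo]
    constructor
    · rintro ⟨y, ⟨h1, h2⟩, rfl⟩
      have hvy : 0 < v - y := by linarith
      refine ⟨by positivity, (div_lt_one (by positivity)).2 ?_⟩
      nlinarith
    · rintro ⟨h1, h2⟩
      have hd : 0 < v - u + u * z := by positivity
      refine ⟨u * v * z / (v - u + u * z), ⟨by positivity, (div_lt_iff₀ hd).2 ?_⟩, ?_⟩
      · nlinarith [mul_pos hu (mul_pos hvu (sub_pos.2 h2))]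
      · have : v - u * v * z / (v - u + u * z) = v * (v - u) / (v - u + u * z) := by
          field_simp; ring
        rw [this]
        field_simp
  · rintro y ⟨h1, h2⟩
    have hvy : 0 < v - y := by linarith
    have huy : 0 < u - y := by linarith
    have e : 1 - y * (v - u) / (u * (v - y)) = v * (u - y) / (u * (v - y)) := by
      field_simp; ring
    rw [e, abs_of_pos (by positivity), Real.div_rpow (by positivity) (by positivity),
      Real.div_rpow (by positivity) (by positivity), Real.mul_rpow h1.le hvu.le,
      Real.mul_rpow hv.le huy.le, Real.mul_rpow hu.le hvy.le, Real.mul_rpow hu.le hvy.le,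
      show 1 - p - q = -(p - 1) + -(q - 1) + -1 by ring,
      show -p - q = -(p - 1) + -(q - 1) + -2 by ring,
      Real.rpow_add hu, Real.rpow_add hu, Real.rpow_add hvy, Real.rpow_add hvy]
    have e1 : v ^ q = v ^ (q - 1) * v := by
      rw [Real.rpow_sub_one hv.ne']; field_simp
    have e2 : (v - u) ^ p = (v - u) ^ (p - 1) * (v - u) := by
      rw [Real.rpow_sub_one hvu.ne']; field_simp
    have e3 : (v - y) ^ (-2 : ℝ) = ((v - y) ^ 2)⁻¹ := by
      rw [Real.rpow_neg hvy.le]; norm_num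
    rw [e1, e2, e3, Real.rpow_neg_one, Real.rpow_neg hu.le, Real.rpow_neg hu.le,
      Real.rpow_neg hvy.le, Real.rpow_neg hvy.le]
    have := Real.rpow_pos_of_pos hu (p - 1)
    have := Real.rpow_pos_of_pos hu (q - 1)
    have := Real.rpow_pos_of_pos hvy (p - 1)
    have := Real.rpow_pos_of_pos hvy (q - 1)
    field_simp

lemma lintegral_Ioi_beta {a u : ℝ} (ha : 0 < a) (ha' : a < 1) (hu : 0 < u) :
    ∫⁻ v in Ioi u, ENNReal.ofReal (v ^ (-a - 1) * (v - u) ^ (-a)) =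
      ENNReal.ofReal (beta (2 * a) (1 - a) / u ^ (2 * a)) := by
  refine lintegral_eq_beta_of_image (f := fun v => u / v) (f' := fun v => -u / v ^ 2)
    (by positivity) (by linarith) (by positivity) measurableSet_Ioi ?_ ?_ ?_ ?_
  · intro v hv
    have hv0 : 0 < v := hu.trans hv
    convert! (hasDerivAt_inv hv0.ne').const_mul u using 1
    ring
  · intro x hx y hy hxy
    have hx0 : 0 < x := hu.trans hx
    have hy0 : 0 < y := hu.trans hy
    dsimp only at hxy
    field_simp at hxy
    exact hxy.symm
  · ext z
    simp only [mem_image, mem_Ioi, mem_Ioo]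
    constructor
    · rintro ⟨v, hv, rfl⟩
      have hv0 : 0 < v := hu.trans hv
      exact ⟨by positivity, (div_lt_one hv0).2 hv⟩
    · rintro ⟨h1, h2⟩
      exact ⟨u / z, (lt_div_iff₀ h1).2 (by nlinarith), by field_simp⟩
  · intro v hv
    have hv0 : 0 < v := hu.trans hv
    have hvu : 0 < v - u := sub_pos.2 hv
    have e : 1 - u / v = (v - u) / v := by field_simp
    rw [e, neg_div, abs_neg, abs_of_pos (by positivity), Real.div_rpow hu.le hv0.le,
      Real.div_rpow hvu.le hv0.le, show 1 - a - 1 = -a by ring,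
      Real.rpow_sub_one hu.ne', Real.rpow_sub_one hv0.ne', Real.rpow_sub_one hv0.ne',
      two_mul, Real.rpow_add hv0, Real.rpow_neg hv0.le]
    have := Real.rpow_pos_of_pos hv0 a
    field_simp

/-- Tonelli's theorem on the triangle `a < y < u < b`. -/
lemma lintegral_triangle_swap {a b : ℝ} {F : ℝ → ℝ → ℝ≥0∞}
    (hF : Measurable (Function.uncurry F)) :
    ∫⁻ u in Ioo a b, ∫⁻ y in Ioo a u, F u y = ∫⁻ y in Ioo a b, ∫⁻ u in Ioo y b, F u y := by
  have h1 : ∫⁻ u in Ioo a b, ∫⁻ y in Ioo a u, F u y =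
      ∫⁻ u in Ioo a b, ∫⁻ y in Ioo a b, {p : ℝ × ℝ | p.2 < p.1}.indicator
        (Function.uncurry F) (u, y) := by
    refine setLIntegral_congr_fun measurableSet_Ioo fun u hu => ?_
    rw [← lintegral_indicator measurableSet_Ioo, ← lintegral_indicator measurableSet_Ioo]
    refine lintegral_congr fun y => ?_
    simp only [indicator, mem_Ioo, mem_ofPred_eq, Function.uncurry_apply_pair] at hu ⊢
    grind
  have h2 : ∫⁻ y in Ioo a b, ∫⁻ u in Ioo y b, F u y =
      ∫⁻ y in Ioo a b, ∫⁻ u in Ioo a b, {p : ℝ × ℝ | p.2 < p.1}.indicator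
        (Function.uncurry F) (u, y) := by
    refine setLIntegral_congr_fun measurableSet_Ioo fun y hy => ?_
    rw [← lintegral_indicator measurableSet_Ioo, ← lintegral_indicator measurableSet_Ioo]
    refine lintegral_congr fun u => ?_
    simp only [indicator, mem_Ioo, mem_ofPred_eq, Function.uncurry_apply_pair] at hy ⊢
    grind
  rw [h1, h2]
  exact lintegral_lintegral_swap
    (hF.indicator (measurableSet_lt measurable_snd measurable_fst)).aemeasurable

lemma measurable_lintegral_Ioo_right {b : ℝ} {F : ℝ → ℝ → ℝ≥0∞}
    (hF : Measurable (Function.uncurry F)) : Measurable fun u => ∫⁻ w in Ioo u b, F u w := by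
  have h : (fun u => ∫⁻ w in Ioo u b, F u w) = fun u => ∫⁻ w,
      {p : ℝ × ℝ | p.1 < p.2 ∧ p.2 < b}.indicator (Function.uncurry F) (u, w) := by
    ext u
    rw [← lintegral_indicator measurableSet_Ioo]
    rfl
  rw [h]
  exact (hF.indicator ((measurableSet_lt measurable_fst measurable_snd).inter
    (measurableSet_lt measurable_snd measurable_const))).lintegral_prod_right'

lemma lintegral_Ioi_of_hasDerivAt {g g' : ℝ → ℝ} {a : ℝ}
    (hcont : ContinuousWithinAt g (Ici a) a) (hderiv : ∀ x ∈ Ioi a, HasDerivAt g (-g' x) x)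
    (hpos : ∀ x ∈ Ioi a, 0 ≤ g' x) (hlim : Tendsto g atTop (𝓝 0)) :
    ∫⁻ x in Ioi a, ENNReal.ofReal (g' x) = ENNReal.ofReal (g a) := by
  have hneg : ∀ x ∈ Ioi a, -g' x ≤ 0 := fun x hx => neg_nonpos.2 (hpos x hx)
  have hi := integrableOn_Ioi_deriv_of_nonpos hcont hderiv hneg hlim
  have hv := integral_Ioi_of_hasDerivAt_of_nonpos hcont hderiv hneg hlim
  have hi' : IntegrableOn g' (Ioi a) := by simpa using hi.neg
  rw [← ofReal_integral_eq_lintegral_ofReal hi'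
    ((ae_restrict_iff' measurableSet_Ioi).2 (Eventually.of_forall hpos))]
  rw [MeasureTheory.integral_neg] at hv
  congr 1
  linarith

lemma lintegral_Ioo_of_hasDerivAt {g g' : ℝ → ℝ} {a b : ℝ} (hab : a ≤ b)
    (hcont : ContinuousOn g (Icc a b)) (hderiv : ∀ x ∈ Ioo a b, HasDerivAt g (g' x) x)
    (hpos : ∀ x ∈ Ioo a b, 0 ≤ g' x) :
    ∫⁻ x in Ioo a b, ENNReal.ofReal (g' x) = ENNReal.ofReal (g b - g a) := by
  have hi : IntegrableOn g' (Ioc a b) := integrableOn_deriv_of_nonneg hcont hderiv hpos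
  have hv := integral_eq_sub_of_hasDerivAt_of_le hab hcont hderiv
    ((intervalIntegrable_iff_integrableOn_Ioc_of_le hab).2 hi)
  rw [integral_of_le hab, integral_Ioc_eq_integral_Ioo] at hv
  rw [← ofReal_integral_eq_lintegral_ofReal (hi.mono_set Ioo_subset_Ioc_self)
    ((ae_restrict_iff' measurableSet_Ioo).2 (Eventually.of_forall hpos)), hv]

/-- The kernel `K_H(t, u) / (c_H u^a)` with `a = 1/2 - H`, as an extended nonnegative real. -/
noncomputable def reducedKernel (a t u : ℝ) : ℝ≥0∞ :=
  ENNReal.ofReal (t ^ (-a) * (t - u) ^ (-a)) +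
    ENNReal.ofReal a * ∫⁻ w in Ioo u t, ENNReal.ofReal (w ^ (-a - 1) * (w - u) ^ (-a))

@[fun_prop]
lemma measurable_reducedKernel (a t : ℝ) : Measurable (reducedKernel a t) := by
  have := measurable_lintegral_Ioo_right (b := t)
    (F := fun u w => ENNReal.ofReal (w ^ (-a - 1) * (w - u) ^ (-a))) (by
      unfold Function.uncurry; fun_prop)
  unfold reducedKernel
  fun_prop

/-- Splitting of the reduced kernel into its limit at `t = ∞` and a tail integral. -/
lemma reducedKernel_eq_tail {a t u : ℝ} (ha : 0 < a) (ha' : a < 1) (hu : 0 < u) (hut : u < t) :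
    reducedKernel a t u = ENNReal.ofReal (a * beta (2 * a) (1 - a) / u ^ (2 * a)) +
      ENNReal.ofReal a * ∫⁻ v in Ioi t, ENNReal.ofReal (v ^ (-a) * (v - u) ^ (-a - 1)) := by
  have ht : 0 < t := hu.trans hut
  have hsplit : ENNReal.ofReal (beta (2 * a) (1 - a) / u ^ (2 * a)) =
      (∫⁻ w in Ioo u t, ENNReal.ofReal (w ^ (-a - 1) * (w - u) ^ (-a))) +
        ∫⁻ w in Ioi t, ENNReal.ofReal (w ^ (-a - 1) * (w - u) ^ (-a)) := by
    rw [← lintegral_Ioi_beta ha ha' hu, ← Ioc_union_Ioi_eq_Ioi hut.le,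
      lintegral_union measurableSet_Ioi (Ioc_disjoint_Ioi le_rfl), restrict_Ioo_eq_restrict_Ioc]
  have hbdry : ENNReal.ofReal (t ^ (-a) * (t - u) ^ (-a)) =
      ENNReal.ofReal a * (∫⁻ w in Ioi t, ENNReal.ofReal (w ^ (-a - 1) * (w - u) ^ (-a))) +
      ENNReal.ofReal a * ∫⁻ v in Ioi t, ENNReal.ofReal (v ^ (-a) * (v - u) ^ (-a - 1)) := by
    rw [← mul_add, ← lintegral_add_left (by fun_prop),
      ← lintegral_const_mul' _ _ ENNReal.ofReal_ne_top]
    have hd : ∀ x ∈ Ici t, HasDerivAt (fun v => v ^ (-a) * (v - u) ^ (-a))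
        (-(a * (x ^ (-a - 1) * (x - u) ^ (-a) + x ^ (-a) * (x - u) ^ (-a - 1)))) x := by
      intro x hx
      have hx' : t ≤ x := hx
      have hx0 : x ≠ 0 := by linarith
      have hxu : x - u ≠ 0 := by linarith
      convert! ((hasDerivAt_id x).rpow_const (Or.inl hx0)).mul
        (((hasDerivAt_id x).sub_const u).rpow_const (Or.inl hxu)) using 1
      simp only [id]
      ring
    have hpos : ∀ x ∈ Ioi t,
        0 ≤ a * (x ^ (-a - 1) * (x - u) ^ (-a) + x ^ (-a) * (x - u) ^ (-a - 1)) := by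
      intro x hx
      have hx' : t < x := hx
      have hx0 : 0 < x := by linarith
      have hxu : 0 < x - u := by linarith
      positivity
    have hlim : Tendsto (fun v : ℝ => v ^ (-a) * (v - u) ^ (-a)) atTop (𝓝 0) := by
      simpa [sub_eq_add_neg] using (tendsto_rpow_neg_atTop ha).mul ((tendsto_rpow_neg_atTop ha).comp
        (tendsto_atTop_add_const_right atTop (-u) tendsto_id))
    rw [← lintegral_Ioi_of_hasDerivAt (hd t self_mem_Ici).continuousAt.continuousWithinAt
      (fun x hx => hd x (Ioi_subset_Ici_self hx)) hpos hlim]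
    refine setLIntegral_congr_fun measurableSet_Ioi fun x hx => ?_
    have hx' : t < x := hx
    have hx0 : 0 < x := by linarith
    have hxu : 0 < x - u := by linarith
    rw [← ENNReal.ofReal_add (by positivity) (by positivity), ← ENNReal.ofReal_mul ha.le]
  rw [reducedKernel, hbdry, mul_div_assoc, ENNReal.ofReal_mul ha.le, hsplit, mul_add]
  ring

lemma lintegral_Ioo_beta_tail_lt_top {a t u : ℝ} (ha : 0 < a) (ha' : a < 1) (hu : 0 < u) :
    ∫⁻ w in Ioo u t, ENNReal.ofReal (w ^ (-a - 1) * (w - u) ^ (-a)) < ∞ :=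
  ((lintegral_mono_set Ioo_subset_Ioi_self).trans (lintegral_Ioi_beta ha ha' hu).le).trans_lt
    ENNReal.ofReal_lt_top

/-- The fractional integral of the reduced kernel. -/
lemma lintegral_reducedKernel_mul {a s y : ℝ} (ha : 0 < a) (ha' : a < 1) (hy : 0 < y)
    (hys : y < s) :
    ∫⁻ u in Ioo y s, reducedKernel a s u * ENNReal.ofReal ((u - y) ^ (a - 1)) =
      ENNReal.ofReal (beta a (1 - a) * y ^ (-a)) := by
  have hs : 0 < s := hy.trans hys
  have hB := beta_pos ha (sub_pos.2 ha')
  have hbeta : ∀ w, y < w → ∫⁻ u in Ioo y w,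
      ENNReal.ofReal ((u - y) ^ (a - 1) * (w - u) ^ (-a)) = ENNReal.ofReal (beta a (1 - a)) := by
    intro w hw
    have := lintegral_Ioo_beta ha (sub_pos.2 ha') hw
    rwa [show 1 - a - 1 = -a by ring, show 1 - a - (1 - a) = 0 by ring, Real.rpow_zero,
      div_one] at this
  have h1 : ∫⁻ u in Ioo y s,
      ENNReal.ofReal (s ^ (-a) * (s - u) ^ (-a)) * ENNReal.ofReal ((u - y) ^ (a - 1)) =
      ENNReal.ofReal (s ^ (-a)) * ENNReal.ofReal (beta a (1 - a)) := by
    rw [← hbeta s hys, ← lintegral_const_mul' _ _ ENNReal.ofReal_ne_top]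
    refine setLIntegral_congr_fun measurableSet_Ioo fun u hu => ?_
    have h1 : 0 < s - u := sub_pos.2 hu.2
    rw [← ENNReal.ofReal_mul (by positivity), ← ENNReal.ofReal_mul (by positivity)]
    ring_nf
  have h2 : ∫⁻ u in Ioo y s, (∫⁻ w in Ioo u s, ENNReal.ofReal (w ^ (-a - 1) * (w - u) ^ (-a))) *
      ENNReal.ofReal ((u - y) ^ (a - 1)) =
      (∫⁻ w in Ioo y s, ENNReal.ofReal (w ^ (-a - 1))) * ENNReal.ofReal (beta a (1 - a)) := by
    simp_rw [← lintegral_mul_const' _ _ ENNReal.ofReal_ne_top]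
    rw [← lintegral_triangle_swap (F := fun w u =>
      ENNReal.ofReal (w ^ (-a - 1) * (w - u) ^ (-a)) * ENNReal.ofReal ((u - y) ^ (a - 1)))
      (by unfold Function.uncurry; fun_prop)]
    refine setLIntegral_congr_fun measurableSet_Ioo fun w hw => ?_
    have hw0 : 0 < w := hy.trans hw.1
    rw [← hbeta w hw.1, ← lintegral_const_mul' _ _ ENNReal.ofReal_ne_top]
    refine setLIntegral_congr_fun measurableSet_Ioo fun u hu => ?_
    have h1 : 0 < w - u := sub_pos.2 hu.2
    rw [← ENNReal.ofReal_mul (by positivity), ← ENNReal.ofReal_mul (by positivity)]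
    ring_nf
  have h3 : ENNReal.ofReal a * ∫⁻ w in Ioo y s, ENNReal.ofReal (w ^ (-a - 1)) =
      ENNReal.ofReal (y ^ (-a) - s ^ (-a)) := by
    have hd : ∀ x, 0 < x → HasDerivAt (fun w : ℝ => -w ^ (-a)) (a * x ^ (-a - 1)) x := by
      intro x hx
      convert! ((hasDerivAt_id x).rpow_const (p := -a) (Or.inl hx.ne')).neg using 1
      simp
    have := lintegral_Ioo_of_hasDerivAt hys.le
      (fun x hx => (hd x (hy.trans_le hx.1)).continuousAt.continuousWithinAt)
      (fun x hx => hd x (hy.trans hx.1)) (fun x hx => by have := hy.trans hx.1; positivity)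
    rw [← lintegral_const_mul' _ _ ENNReal.ofReal_ne_top]
    simp_rw [← ENNReal.ofReal_mul ha.le]
    rw [this]
    ring_nf
  have hmono : s ^ (-a) ≤ y ^ (-a) :=
    Real.rpow_le_rpow_of_nonpos hy hys.le (by linarith)
  simp_rw [reducedKernel, add_mul]
  rw [lintegral_add_left (by fun_prop), h1]
  simp_rw [mul_assoc]
  rw [lintegral_const_mul' _ _ ENNReal.ofReal_ne_top, h2, ← mul_assoc, h3, ← add_mul,
    ← ENNReal.ofReal_add (by positivity) (by linarith), ← ENNReal.ofReal_mul (by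
      have := Real.rpow_pos_of_pos hs (-a); linarith)]
  ring_nf

/-- Pairing the reduced kernel with a fractional integral of order `a`. -/
lemma lintegral_reducedKernel_mul_fractionalIntegral {a s : ℝ} (ha : 0 < a) (ha' : a < 1)
    {g : ℝ → ℝ} (hg : Measurable g) (hg0 : ∀ y ∈ Ioo 0 s, 0 ≤ g y) :
    ∫⁻ u in Ioo 0 s, reducedKernel a s u *
        ∫⁻ y in Ioo 0 u, ENNReal.ofReal (g y * (u - y) ^ (a - 1)) =
      ENNReal.ofReal (beta a (1 - a)) * ∫⁻ y in Ioo 0 s, ENNReal.ofReal (y ^ (-a) * g y) := by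
  have hB := beta_pos ha (sub_pos.2 ha')
  have h1 : ∀ u, reducedKernel a s u * ∫⁻ y in Ioo 0 u, ENNReal.ofReal (g y * (u - y) ^ (a - 1)) =
      ∫⁻ y in Ioo 0 u, reducedKernel a s u * ENNReal.ofReal (g y * (u - y) ^ (a - 1)) :=
    fun u => (lintegral_const_mul _ (by fun_prop)).symm
  simp_rw [h1]
  rw [lintegral_triangle_swap (by unfold Function.uncurry; fun_prop),
    ← lintegral_const_mul' _ _ ENNReal.ofReal_ne_top]
  refine setLIntegral_congr_fun measurableSet_Ioo fun y hy => ?_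
  have hy0 : 0 < y := hy.1
  rw [← mul_comm (g y), ENNReal.ofReal_mul (hg0 y hy), mul_left_comm,
    ← ENNReal.ofReal_mul hB.le, ← lintegral_reducedKernel_mul ha ha' hy.1 hy.2,
    ← lintegral_const_mul' _ _ ENNReal.ofReal_ne_top]
  refine setLIntegral_congr_fun measurableSet_Ioo fun u hu => ?_
  rw [ENNReal.ofReal_mul (hg0 y hy), mul_left_comm]

lemma lintegral_reducedKernel {a s : ℝ} (ha : 0 < a) (ha' : a < 1 / 2) (hs : 0 < s) :
    ∫⁻ u in Ioo 0 s, reducedKernel a s u = ENNReal.ofReal (s ^ (1 - 2 * a) / (1 - 2 * a)) := by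
  have h1a : 0 < 1 - a := by linarith
  have h2a : 0 < 1 - 2 * a := by linarith
  have hB := beta_pos ha h1a
  have h := lintegral_reducedKernel_mul_fractionalIntegral (s := s) ha (by linarith)
    (g := fun y => y ^ (-a)) (by fun_prop) fun y hy => Real.rpow_nonneg hy.1.le _
  have hl : ∫⁻ u in Ioo 0 s, reducedKernel a s u *
      ∫⁻ y in Ioo 0 u, ENNReal.ofReal (y ^ (-a) * (u - y) ^ (a - 1)) =
      ENNReal.ofReal (beta a (1 - a)) * ∫⁻ u in Ioo 0 s, reducedKernel a s u := by
    rw [← lintegral_const_mul' _ _ ENNReal.ofReal_ne_top]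
    refine setLIntegral_congr_fun measurableSet_Ioo fun u hu => ?_
    have := lintegral_Ioo_beta h1a ha hu.1
    simp only [sub_zero, show 1 - (1 - a) - a = 0 by ring, show 1 - a - 1 = -a by ring,
      Real.rpow_zero, div_one] at this
    rw [this, mul_comm, beta, beta, mul_comm (Real.Gamma a), add_comm a]
  have hr : ∫⁻ y in Ioo 0 s, ENNReal.ofReal (y ^ (-a) * y ^ (-a)) =
      ENNReal.ofReal (s ^ (1 - 2 * a) / (1 - 2 * a)) := by
    have hF := lintegral_Ioo_of_hasDerivAt (g := fun y => y ^ (1 - 2 * a) / (1 - 2 * a))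
      (g' := fun y => y ^ (-a) * y ^ (-a)) hs.le
      ((Real.continuous_rpow_const h2a.le).div_const _).continuousOn (fun x hx => by
        convert! ((hasDerivAt_id x).rpow_const (p := 1 - 2 * a)
          (Or.inl hx.1.ne')).div_const (1 - 2 * a) using 1
        rw [← Real.rpow_add hx.1, id, one_mul, mul_div_cancel_left₀ _ h2a.ne']
        ring_nf)
      (fun x _ => mul_self_nonneg _)
    rw [hF, Real.zero_rpow h2a.ne', zero_div, sub_zero]
  rw [hl, hr] at h
  exact (ENNReal.mul_right_inj (by simpa using hB) ENNReal.ofReal_ne_top).1 h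

lemma beta_add_one_mul_beta {a : ℝ} (ha : 0 < a) (ha' : a < 1) :
    2 * a * beta (2 * a) (1 - a) * beta (a + 1) a = beta a (1 - a) := by
  have h1 := Real.Gamma_pos_of_pos (show 0 < 2 * a by linarith)
  have h2 := Real.Gamma_pos_of_pos (show 0 < a + 1 by linarith)
  simp only [beta, show 2 * a + (1 - a) = a + 1 by ring, show a + 1 + a = 2 * a + 1 by ring,
    Real.Gamma_add_one (show 2 * a ≠ 0 by positivity), show a + (1 - a) = 1 by ring,
    Real.Gamma_one]
  field_simp

lemma lintegral_reducedKernel_mul_rpow {a s v : ℝ} (ha : 0 < a) (ha' : a < 1) (hs : 0 < s)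
    (hsv : s < v) :
    ∫⁻ u in Ioo 0 s, reducedKernel a s u * ENNReal.ofReal (u ^ (2 * a) * (v - u) ^ (-a - 1)) =
      ENNReal.ofReal (v ^ a * (beta (2 * a) (1 - a) * ((v - s) ^ (-2 * a) - v ^ (-2 * a)))) := by
  have hv : 0 < v := hs.trans hsv
  have hvs : 0 < v - s := sub_pos.2 hsv
  have hB := beta_pos ha (sub_pos.2 ha')
  have hB' := beta_pos (show 0 < a + 1 by linarith) ha
  have hD : 0 < beta (a + 1) a / v ^ a := by positivity
  have h := lintegral_reducedKernel_mul_fractionalIntegral (s := s) ha ha'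
    (g := fun y => y ^ a * (v - y) ^ (-2 * a - 1)) (by fun_prop) fun y hy =>
      mul_nonneg (Real.rpow_nonneg hy.1.le _) (Real.rpow_nonneg (by linarith [hy.2]) _)
  have hl : ∫⁻ u in Ioo 0 s, reducedKernel a s u *
      ∫⁻ y in Ioo 0 u, ENNReal.ofReal (y ^ a * (v - y) ^ (-2 * a - 1) * (u - y) ^ (a - 1)) =
      ENNReal.ofReal (beta (a + 1) a / v ^ a) * ∫⁻ u in Ioo 0 s,
        reducedKernel a s u * ENNReal.ofReal (u ^ (2 * a) * (v - u) ^ (-a - 1)) := by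
    rw [← lintegral_const_mul' _ _ ENNReal.ofReal_ne_top]
    refine setLIntegral_congr_fun measurableSet_Ioo fun u hu => ?_
    have hu0 : 0 < u := hu.1
    have hvu : 0 < v - u := by linarith [hu.2]
    have := lintegral_Ioo_beta_mobius (show 0 < a + 1 by linarith) ha hu.1 (hu.2.trans hsv)
    rw [show a + 1 - 1 = a by ring, show -(a + 1) - a = -2 * a - 1 by ring,
      show 1 - (a + 1) - a = -(2 * a) by ring] at this
    rw [this, mul_left_comm, ← ENNReal.ofReal_mul hD.le, show -a - 1 = -(a + 1) by ring,
      Real.rpow_neg hvu.le, Real.rpow_neg hu0.le]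
    congr 2
    have := Real.rpow_pos_of_pos hu0 (2 * a)
    field_simp
  have hr : ∫⁻ y in Ioo 0 s, ENNReal.ofReal (y ^ (-a) * (y ^ a * (v - y) ^ (-2 * a - 1))) =
      ENNReal.ofReal (((v - s) ^ (-2 * a) - v ^ (-2 * a)) / (2 * a)) := by
    have hd : ∀ x, x < v → HasDerivAt (fun y => (v - y) ^ (-2 * a) / (2 * a))
        ((v - x) ^ (-2 * a - 1)) x := by
      intro x hx
      have hvx : v - x ≠ 0 := by linarith
      convert! (((hasDerivAt_id x).const_sub v).rpow_const (p := -2 * a)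
        (Or.inl hvx)).div_const (2 * a) using 1
      simp only [id]
      field_simp
    have hF := lintegral_Ioo_of_hasDerivAt hs.le
      (fun x hx => (hd x (hx.2.trans_lt hsv)).continuousAt.continuousWithinAt)
      (fun x hx => hd x (hx.2.trans hsv))
      (fun x hx => Real.rpow_nonneg (by linarith [hx.2]) _)
    rw [sub_zero, ← sub_div] at hF
    rw [← hF]
    refine setLIntegral_congr_fun measurableSet_Ioo fun y hy => ?_
    rw [← mul_assoc, ← Real.rpow_add hy.1, neg_add_cancel, Real.rpow_zero, one_mul]
  rw [hl, hr, ← ENNReal.ofReal_mul hB.le] at h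
  refine (ENNReal.mul_right_inj (by simpa using hD) ENNReal.ofReal_ne_top).1 (h.trans ?_)
  rw [← ENNReal.ofReal_mul hD.le, ← beta_add_one_mul_beta ha ha']
  congr 1
  field_simp

lemma tendsto_rpow_sub_rpow_atTop {p s : ℝ} (hp : 0 < p) (hp' : p < 1) (hs : 0 < s) :
    Tendsto (fun v : ℝ => v ^ p - (v - s) ^ p) atTop (𝓝 0) := by
  have hlim : Tendsto (fun v : ℝ => s * v ^ (-(1 - p))) atTop (𝓝 0) := by
    simpa using (tendsto_rpow_neg_atTop (sub_pos.2 hp')).const_mul s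
  refine tendsto_of_tendsto_of_tendsto_of_le_of_le' tendsto_const_nhds hlim ?_ ?_
  · filter_upwards [eventually_gt_atTop s] with v hv
    exact sub_nonneg.2 (Real.rpow_le_rpow (by linarith) (by linarith) hp.le)
  · filter_upwards [eventually_gt_atTop s] with v hv
    have hv0 : 0 < v := hs.trans hv
    have hx : 0 < (v - s) / v := div_pos (by linarith) hv0
    have h1 : (v - s) / v ≤ ((v - s) / v) ^ p :=
      Real.self_le_rpow_of_le_one hx.le ((div_le_one hv0).2 (by linarith)) hp'.le
    rw [Real.div_rpow (by linarith) hv0.le] at h1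
    have hvp := Real.rpow_pos_of_pos hv0 p
    rw [show -(1 - p) = p - 1 by ring, Real.rpow_sub_one hv0.ne']
    rw [div_le_div_iff₀ hv0 hvp] at h1
    rw [← mul_div_assoc, le_div_iff₀ hv0]
    linarith

lemma lintegral_Ioi_rpow_sub_rpow {a s t : ℝ} (ha : 0 < a) (ha' : a < 1 / 2) (hs : 0 < s)
    (hst : s ≤ t) :
    ∫⁻ v in Ioi t, ENNReal.ofReal ((v - s) ^ (-2 * a) - v ^ (-2 * a)) =
      ENNReal.ofReal ((t ^ (1 - 2 * a) - (t - s) ^ (1 - 2 * a)) / (1 - 2 * a)) := by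
  have h2a : 0 < 1 - 2 * a := by linarith
  refine lintegral_Ioi_of_hasDerivAt
    (g := fun v => (v ^ (1 - 2 * a) - (v - s) ^ (1 - 2 * a)) / (1 - 2 * a)) ?_ ?_ ?_ ?_
  · exact (((Real.continuous_rpow_const h2a.le).sub ((Real.continuous_rpow_const h2a.le).comp
      (continuous_sub_right s))).div_const _).continuousWithinAt
  · intro x hx
    have hx' : t < x := hx
    have hx0 : x ≠ 0 := by linarith
    have hxs : x - s ≠ 0 := by linarith
    convert! (((hasDerivAt_id x).rpow_const (p := 1 - 2 * a) (Or.inl hx0)).sub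
      (((hasDerivAt_id x).sub_const s).rpow_const (p := 1 - 2 * a)
        (Or.inl hxs))).div_const (1 - 2 * a) using 1
    simp only [id]
    rw [show 1 - 2 * a - 1 = -2 * a by ring]
    field_simp
    ring
  · intro x hx
    have hx' : t < x := hx
    exact sub_nonneg.2 (Real.rpow_le_rpow_of_nonpos (by linarith) (by linarith) (by linarith))
  · simpa using (tendsto_rpow_sub_rpow_atTop h2a (by linarith) hs).div_const (1 - 2 * a)

lemma lintegral_reducedKernel_mul_reducedKernel {a s t : ℝ} (ha : 0 < a) (ha' : a < 1 / 2)
    (hs : 0 < s) (hst : s ≤ t) :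
    ∫⁻ u in Ioo 0 s, ENNReal.ofReal (u ^ (2 * a)) * (reducedKernel a t u * reducedKernel a s u) =
      ENNReal.ofReal (a * beta (2 * a) (1 - a) / (1 - 2 * a) *
        (t ^ (1 - 2 * a) + s ^ (1 - 2 * a) - (t - s) ^ (1 - 2 * a))) := by
  have ha1 : a < 1 := by linarith
  have h2a : 0 < 1 - 2 * a := by linarith
  have hB := beta_pos (show 0 < 2 * a by linarith) (sub_pos.2 ha1)
  have hsplit : ∀ u ∈ Ioo 0 s,
      ENNReal.ofReal (u ^ (2 * a)) * (reducedKernel a t u * reducedKernel a s u) =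
      ENNReal.ofReal (a * beta (2 * a) (1 - a)) * reducedKernel a s u +
      ENNReal.ofReal a * ∫⁻ v in Ioi t, ENNReal.ofReal (v ^ (-a)) *
        (reducedKernel a s u * ENNReal.ofReal (u ^ (2 * a) * (v - u) ^ (-a - 1))) := by
    intro u hu
    have hu0 : 0 < u := hu.1
    have hut : u < t := hu.2.trans_le hst
    have hpow := Real.rpow_pos_of_pos hu0 (2 * a)
    rw [reducedKernel_eq_tail ha ha1 hu0 hut, add_mul, mul_add, ← mul_assoc,
      ← ENNReal.ofReal_mul hpow.le, mul_div_cancel₀ _ hpow.ne']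
    congr 1
    have e : ∫⁻ v in Ioi t, ENNReal.ofReal (v ^ (-a)) *
        (reducedKernel a s u * ENNReal.ofReal (u ^ (2 * a) * (v - u) ^ (-a - 1))) =
        (ENNReal.ofReal (u ^ (2 * a)) * reducedKernel a s u) *
          ∫⁻ v in Ioi t, ENNReal.ofReal (v ^ (-a) * (v - u) ^ (-a - 1)) := by
      rw [← lintegral_const_mul _ (by fun_prop)]
      refine setLIntegral_congr_fun measurableSet_Ioi fun v hv => ?_
      have hv' : t < v := hv
      have hv0 : 0 < v := by linarith
      rw [ENNReal.ofReal_mul hpow.le, ENNReal.ofReal_mul (by positivity)]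
      ring
    rw [e]
    ring
  have hm : Measurable (Function.uncurry fun u v => ENNReal.ofReal (v ^ (-a)) *
      (reducedKernel a s u * ENNReal.ofReal (u ^ (2 * a) * (v - u) ^ (-a - 1)))) := by
    unfold Function.uncurry
    fun_prop
  have htail : ∫⁻ u in Ioo 0 s, ∫⁻ v in Ioi t, ENNReal.ofReal (v ^ (-a)) *
      (reducedKernel a s u * ENNReal.ofReal (u ^ (2 * a) * (v - u) ^ (-a - 1))) =
      ENNReal.ofReal (beta (2 * a) (1 - a)) *
        ENNReal.ofReal ((t ^ (1 - 2 * a) - (t - s) ^ (1 - 2 * a)) / (1 - 2 * a)) := by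
    rw [lintegral_lintegral_swap hm.aemeasurable, ← lintegral_Ioi_rpow_sub_rpow ha ha' hs hst,
      ← lintegral_const_mul' _ _ ENNReal.ofReal_ne_top]
    refine setLIntegral_congr_fun measurableSet_Ioi fun v hv => ?_
    have hv' : t < v := hv
    have hv0 : 0 < v := by linarith
    rw [lintegral_const_mul' _ _ ENNReal.ofReal_ne_top,
      lintegral_reducedKernel_mul_rpow ha ha1 hs (hst.trans_lt hv),
      ← ENNReal.ofReal_mul (by positivity), ← ENNReal.ofReal_mul hB.le, ← mul_assoc,
      ← Real.rpow_add hv0, neg_add_cancel, Real.rpow_zero, one_mul]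
  have hmono : (t - s) ^ (1 - 2 * a) ≤ t ^ (1 - 2 * a) :=
    Real.rpow_le_rpow (by linarith) (by linarith) h2a.le
  rw [setLIntegral_congr_fun measurableSet_Ioo hsplit, lintegral_add_left (by fun_prop),
    lintegral_const_mul' _ _ ENNReal.ofReal_ne_top,
    lintegral_const_mul' _ _ ENNReal.ofReal_ne_top, htail, lintegral_reducedKernel ha ha' hs,
    ← ENNReal.ofReal_mul (by positivity), ← ENNReal.ofReal_mul hB.le, ← ENNReal.ofReal_mul ha.le,
    ← ENNReal.ofReal_add (by positivity)
      (mul_nonneg ha.le (mul_nonneg hB.le (div_nonneg (by linarith) h2a.le)))]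
  congr 1
  ring

lemma KH_eq_toReal_reducedKernel {H t u : ℝ} (hH : H ∈ Ioo (0 : ℝ) (1 / 2)) (hu : 0 < u)
    (hut : u < t) :
    KH H t u = cH H * (u ^ (1 / 2 - H) * (reducedKernel (1 / 2 - H) t u).toReal) := by
  obtain ⟨hH0, hH1⟩ := hH
  have ht : 0 < t := hu.trans hut
  have htu : 0 < t - u := sub_pos.2 hut
  have ha : 0 < 1 / 2 - H := by linarith
  have hint : ∫ w in u..t, w ^ (H - 3 / 2) * (w - u) ^ (H - 1 / 2) =
      (∫⁻ w in Ioo u t,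
        ENNReal.ofReal (w ^ (-(1 / 2 - H) - 1) * (w - u) ^ (-(1 / 2 - H)))).toReal := by
    rw [integral_of_le hut.le, integral_Ioc_eq_integral_Ioo, integral_eq_lintegral_of_nonneg_ae]
    · rw [show H - 3 / 2 = -(1 / 2 - H) - 1 by ring, show H - 1 / 2 = -(1 / 2 - H) by ring]
    · refine (ae_restrict_iff' measurableSet_Ioo).2 (Eventually.of_forall fun w hw => ?_)
      exact mul_nonneg (Real.rpow_nonneg (hu.trans hw.1).le _)
        (Real.rpow_nonneg (sub_pos.2 hw.1).le _)
    · exact Measurable.aestronglyMeasurable (by fun_prop)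
  have hfin := lintegral_Ioo_beta_tail_lt_top (t := t) ha (by linarith) hu
  rw [KH, hint, reducedKernel, ENNReal.toReal_add ENNReal.ofReal_ne_top
    (ENNReal.mul_ne_top ENNReal.ofReal_ne_top hfin.ne), ENNReal.toReal_mul,
    ENNReal.toReal_ofReal ha.le, ENNReal.toReal_ofReal (by positivity),
    Real.div_rpow ht.le hu.le, show H - 1 / 2 = -(1 / 2 - H) by ring, Real.rpow_neg hu.le,
    div_inv_eq_mul]
  ring

lemma cH_sq {H : ℝ} (hH : H ∈ Ioo (0 : ℝ) (1 / 2)) :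
    cH H ^ 2 = 2 * H / ((1 - 2 * H) * beta (1 - 2 * H) (H + 1 / 2)) := by
  have hB := beta_pos (show 0 < 1 - 2 * H by linarith [hH.2])
    (show 0 < H + 1 / 2 by linarith [hH.1])
  have h1 : 0 < 1 - 2 * H := by linarith [hH.2]
  have h0 := hH.1
  exact Real.sq_sqrt (by unfold beta at hB; positivity)

lemma integral_KH_mul_KH_of_le {H s t : ℝ} (hH : H ∈ Ioo (0 : ℝ) (1 / 2)) (hs : 0 < s)
    (hst : s ≤ t) :
    ∫ u in 0..s, KH H t u * KH H s u =
      (t ^ (2 * H) + s ^ (2 * H) - (t - s) ^ (2 * H)) / 2 := by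
  have hH0 := hH.1
  have hH1 := hH.2
  have ha : 0 < 1 / 2 - H := by linarith
  have hB := beta_pos (show 0 < 1 - 2 * H by linarith) (show 0 < H + 1 / 2 by linarith)
  have hmono : (t - s) ^ (2 * H) ≤ t ^ (2 * H) :=
    Real.rpow_le_rpow (by linarith) (by linarith) (by linarith)
  have hL := lintegral_reducedKernel_mul_reducedKernel ha (by linarith) hs hst
  rw [show 2 * (1 / 2 - H) = 1 - 2 * H by ring, show 1 - (1 / 2 - H) = H + 1 / 2 by ring,
    show 1 - (1 - 2 * H) = 2 * H by ring] at hL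
  have hcongr : ∀ u ∈ Ioo 0 s, KH H t u * KH H s u = cH H ^ 2 *
      (ENNReal.ofReal (u ^ (1 - 2 * H)) *
        (reducedKernel (1 / 2 - H) t u * reducedKernel (1 / 2 - H) s u)).toReal := by
    intro u hu
    have hu0 : 0 < u := hu.1
    rw [KH_eq_toReal_reducedKernel hH hu0 (hu.2.trans_le hst),
      KH_eq_toReal_reducedKernel hH hu0 hu.2, ENNReal.toReal_mul, ENNReal.toReal_mul,
      ENNReal.toReal_ofReal (by positivity),
      show 1 - 2 * H = (1 / 2 - H) + (1 / 2 - H) by ring, Real.rpow_add hu0]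
    ring
  have hm : Measurable fun u => ENNReal.ofReal (u ^ (1 - 2 * H)) *
      (reducedKernel (1 / 2 - H) t u * reducedKernel (1 / 2 - H) s u) := by fun_prop
  rw [integral_of_le hs.le, integral_Ioc_eq_integral_Ioo,
    setIntegral_congr_fun measurableSet_Ioo hcongr, MeasureTheory.integral_const_mul,
    integral_toReal hm.aemeasurable
      (ae_lt_top hm (by rw [hL]; exact ENNReal.ofReal_ne_top)), hL,
    ENNReal.toReal_ofReal, cH_sq hH]
  · have : 1 - 2 * H ≠ 0 := by linarith
    generalize beta (1 - 2 * H) (H + 1 / 2) = B at hB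
    field_simp
  · have := Real.rpow_pos_of_pos hs (2 * H)
    exact mul_nonneg (by positivity) (by linarith)

end FractionalKernel

/-- For `H ∈ (0,1/2)` and `s, t > 0`,
`∫_0^{min(s,t)} K_H(t,u) K_H(s,u) du = (1/2)(t^{2H} + s^{2H} − |t−s|^{2H})`. -/
theorem KH_integral_eq_covariance (H : ℝ) (hH : H ∈ Set.Ioo (0 : ℝ) (1 / 2))
    (s t : ℝ) (hs : 0 < s) (ht : 0 < t) :
    (∫ u in (0:ℝ)..(min s t), KH H t u * KH H s u) =
      (t ^ (2 * H) + s ^ (2 * H) - |t - s| ^ (2 * H)) / 2 := by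
  rcases le_total s t with h | h
  · rw [min_eq_left h, abs_of_nonneg (sub_nonneg.2 h)]
    exact FractionalKernel.integral_KH_mul_KH_of_le hH hs h
  · rw [min_eq_right h, abs_sub_comm, abs_of_nonneg (sub_nonneg.2 h), add_comm (t ^ _)]
    simp_rw [mul_comm (KH H t _)]
    exact FractionalKernel.integral_KH_mul_KH_of_le hH ht h
end

section
/- Let X = (X_1,…,X_n) be a centered jointly Gaussian random vector with covariance matrix Σ = ( E[X_j X_k] )_{1≤j,k≤n}. Then E[ |X_1| · |X_2| ⋯ |X_n| ] ≤ sqrt( perm(Σ) ), where the permanent of an n×n matrix A = (a_{ij}) is perm(A) := Σ_{π ∈ S_n} Π_{j=1}^n a_{j, π(j)}, the sum running over all permutations π of {1,…,n}. -/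
open MeasureTheory

/-- The permanent of a square matrix: `perm(A) = Σ_{π ∈ S_n} ∏_j A_{j, π(j)}`. -/
noncomputable def matrixPermanent {n : ℕ} (A : Matrix (Fin n) (Fin n) ℝ) : ℝ :=
  ∑ π : Equiv.Perm (Fin n), ∏ j, A j (π j)

open ProbabilityTheory
open scoped ComplexConjugate MatrixOrder

lemma card_perm_comp_eq {ι κ : Type*} [Fintype ι] [DecidableEq ι] [Fintype κ] [DecidableEq κ]
    (f g : ι → κ) :
    (∏ k, if Fintype.card {i // f i = k} = Fintype.card {i // g i = k}
        then (Fintype.card {i // f i = k}).factorial else 0) =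
      Fintype.card {σ : Equiv.Perm ι // f ∘ σ = g} := by
  by_cases h : ∀ k, Fintype.card {i // f i = k} = Fintype.card {i // g i = k}
  · let τ : Equiv.Perm ι := ((Equiv.sigmaFiberEquiv g).symm.trans
      (Equiv.sigmaCongrRight fun k => (Fintype.equivOfCardEq (h k)).symm)).trans
      (Equiv.sigmaFiberEquiv f)
    have hτ : f ∘ τ = g := by
      funext i
      exact (Fintype.equivOfCardEq (h (g i))).symm ⟨i, rfl⟩ |>.2
    simp only [h, if_true]
    simp only [← h]
    rw [← DomMulAct.stabilizer_card f]
    refine Fintype.card_congr ((Equiv.mulRight τ).subtypeEquiv fun σ => ?_)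
    rw [← hτ]
    constructor
    · intro hσ
      rw [Equiv.coe_mulRight, Equiv.Perm.coe_mul, ← Function.comp_assoc, hσ]
    · intro hσ
      rw [Equiv.coe_mulRight, Equiv.Perm.coe_mul, ← Function.comp_assoc] at hσ
      exact τ.surjective.injective_comp_right hσ
  · obtain ⟨k, hk⟩ := not_forall.mp h
    rw [Finset.prod_eq_zero (Finset.mem_univ k) (if_neg hk), eq_comm, Fintype.card_eq_zero_iff]
    refine ⟨fun ⟨σ, hσ⟩ => hk ?_⟩
    subst hσ
    exact Fintype.card_congr ((σ.symm.subtypeEquiv fun i => by simp))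

lemma integral_circle_exp_pow (a b : ℕ) :
    ∫ θ in Set.Ioo (-Real.pi) Real.pi,
      (Complex.exp (θ * Complex.I)) ^ a * (conj (Complex.exp (θ * Complex.I))) ^ b =
      if a = b then 2 * (Real.pi : ℂ) else 0 := by
  have hint : ∀ θ : ℝ, (Complex.exp (θ * Complex.I)) ^ a * (conj (Complex.exp (θ * Complex.I))) ^ b
      = Complex.exp (((a - b) * Complex.I) * θ) := by
    intro θ
    rw [← Complex.exp_conj, ← Complex.exp_nat_mul, ← Complex.exp_nat_mul, ← Complex.exp_add]
    congr 1
    simp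
    ring
  simp_rw [hint]
  rw [← integral_Ioc_eq_integral_Ioo,
    ← intervalIntegral.integral_of_le (by linarith [Real.pi_pos])]
  split_ifs with h
  · subst h
    simp
    ring
  · have hne : ((a : ℂ) - b) * Complex.I ≠ 0 :=
      mul_ne_zero (sub_ne_zero.mpr (by exact_mod_cast h)) Complex.I_ne_zero
    rw [integral_exp_mul_complex hne, div_eq_zero_iff]
    left
    rw [sub_eq_zero, Complex.exp_eq_exp_iff_exists_int]
    exact ⟨(a : ℤ) - b, by push_cast; ring⟩

lemma integral_pow_mul_exp_neg_sq_div_two (a : ℕ) :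
    ∫ r in Set.Ioi (0 : ℝ), r ^ (2 * a + 1) * Real.exp (-r ^ 2 / 2) = 2 ^ a * a.factorial := by
  have h := integral_rpow_mul_exp_neg_mul_rpow (p := 2) (q := 2 * a + 1) (b := 1 / 2)
    (by norm_num) (by linarith [a.cast_nonneg (α := ℝ)]) (by norm_num)
  have e : ((2 * a + 1 : ℝ) + 1) / 2 = a + 1 := by ring
  rw [e, Real.Gamma_nat_eq_factorial, neg_div, e] at h
  convert! h using 1
  · refine setIntegral_congr_fun measurableSet_Ioi fun r hr => ?_
    rw [← Real.rpow_natCast r (2 * a + 1)]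
    congr 2
    · push_cast; rfl
    · rw [Real.rpow_two]; ring
  · rw [Real.rpow_neg (by norm_num), one_div, Real.inv_rpow (by norm_num), inv_inv,
      show (a + 1 : ℝ) = ((a + 1 : ℕ) : ℝ) by push_cast; rfl, Real.rpow_natCast]
    ring

/-- The complex number with real part `p.1` and imaginary part `p.2`. -/
noncomputable def complexOfPair (p : ℝ × ℝ) : ℂ := p.1 + p.2 * Complex.I

lemma integral_gaussianReal_prod_eq (F : ℝ × ℝ → ℂ) :
    ∫ p, F p ∂((gaussianReal 0 1).prod (gaussianReal 0 1)) =
      ∫ p : ℝ × ℝ, ((2 * Real.pi)⁻¹ * Real.exp (-(p.1 ^ 2 + p.2 ^ 2) / 2)) • F p := by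
  rw [gaussianReal_of_var_ne_zero _ one_ne_zero,
    prod_withDensity (measurable_gaussianPDF _ _) (measurable_gaussianPDF _ _),
    integral_withDensity_eq_integral_toReal_smul (by fun_prop)
      (ae_of_all _ fun _ => ENNReal.mul_lt_top gaussianPDF_lt_top gaussianPDF_lt_top)]
  refine integral_congr_ae (ae_of_all _ fun p => ?_)
  simp only [ENNReal.toReal_mul, toReal_gaussianPDF, gaussianPDFReal]
  congr 1
  have hs : (Real.sqrt (2 * Real.pi))⁻¹ * (Real.sqrt (2 * Real.pi))⁻¹ = (2 * Real.pi)⁻¹ := by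
    rw [← mul_inv, Real.mul_self_sqrt (by positivity)]
  rw [← hs, show -(p.1 ^ 2 + p.2 ^ 2) / 2 = -p.1 ^ 2 / 2 + -p.2 ^ 2 / 2 by ring, Real.exp_add]
  simp
  ring

lemma integral_complexOfPair_pow_mul_conj_pow (a b : ℕ) :
    ∫ p, complexOfPair p ^ a * conj (complexOfPair p) ^ b
        ∂((gaussianReal 0 1).prod (gaussianReal 0 1)) =
      if a = b then (2 : ℂ) ^ a * a.factorial else 0 := by
  rw [integral_gaussianReal_prod_eq, ← integral_comp_polarCoord_symm]
  have key : ∀ p : ℝ × ℝ, p.1 • (((2 * Real.pi)⁻¹ * Real.exp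
        (-((polarCoord.symm p).1 ^ 2 + (polarCoord.symm p).2 ^ 2) / 2)) •
        (complexOfPair (polarCoord.symm p) ^ a * conj (complexOfPair (polarCoord.symm p)) ^ b)) =
      (((2 * Real.pi)⁻¹ * (p.1 ^ (a + b + 1) * Real.exp (-p.1 ^ 2 / 2)) : ℝ) : ℂ) *
        ((Complex.exp (p.2 * Complex.I)) ^ a * (conj (Complex.exp (p.2 * Complex.I))) ^ b) := by
    intro p
    have h1 : (polarCoord.symm p).1 ^ 2 + (polarCoord.symm p).2 ^ 2 = p.1 ^ 2 := by
      simp only [polarCoord_symm_apply]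
      linear_combination p.1 ^ 2 * Real.cos_sq_add_sin_sq p.2
    have h2 : complexOfPair (polarCoord.symm p) = p.1 * Complex.exp (p.2 * Complex.I) := by
      simp only [complexOfPair, polarCoord_symm_apply, Complex.exp_mul_I]
      push_cast
      ring
    rw [h1, h2]
    simp only [Complex.real_smul, map_mul, Complex.conj_ofReal]
    push_cast
    ring
  simp_rw [key]
  rw [polarCoord_target, Measure.volume_eq_prod,
    setIntegral_prod_mul (fun r : ℝ => (((2 * Real.pi)⁻¹ * (r ^ (a + b + 1) *
      Real.exp (-r ^ 2 / 2)) : ℝ) : ℂ)) (fun θ : ℝ => (Complex.exp (θ * Complex.I)) ^ a *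
      (conj (Complex.exp (θ * Complex.I))) ^ b), integral_circle_exp_pow]
  split_ifs with h
  · subst h
    rw [integral_complex_ofReal, integral_const_mul, ← two_mul,
      integral_pow_mul_exp_neg_sq_div_two]
    have : (Real.pi : ℂ) ≠ 0 := by exact_mod_cast Real.pi_ne_zero
    push_cast
    field_simp
  · simp

lemma integrable_complexOfPair_pow_mul_conj_pow (a b : ℕ) :
    Integrable (fun p => complexOfPair p ^ a * conj (complexOfPair p) ^ b)
      ((gaussianReal 0 1).prod (gaussianReal 0 1)) := by
  have hm : Measurable complexOfPair := by unfold complexOfPair; fun_prop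
  have h : MemLp complexOfPair (a + b : ℕ) ((gaussianReal 0 1).prod (gaussianReal 0 1)) := by
    have hid := memLp_id_gaussianReal' (μ := 0) (v := 1) (a + b : ℕ) (ENNReal.natCast_ne_top _)
    have h₁ : MemLp (fun p : ℝ × ℝ => (p.1 : ℂ)) (a + b : ℕ)
        ((gaussianReal 0 1).prod (gaussianReal 0 1)) :=
      (hid.comp_fst (gaussianReal 0 1)).ofReal
    have h₂ : MemLp (fun p : ℝ × ℝ => (p.2 : ℂ)) (a + b : ℕ)
        ((gaussianReal 0 1).prod (gaussianReal 0 1)) :=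
      (hid.comp_snd (gaussianReal 0 1)).ofReal
    exact h₁.add (h₂.mul_const Complex.I)
  have hnorm := h.integrable_norm_pow'
  refine hnorm.mono' (by fun_prop) (ae_of_all _ fun p => ?_)
  simp [pow_add]

section

variable {ι κ : Type*} [Fintype ι] [Fintype κ] [DecidableEq κ]

lemma prod_complexOfPair_eq_prod_pow (f g : ι → κ) (w : κ → ℝ × ℝ) :
    ∏ i, complexOfPair (w (f i)) * conj (complexOfPair (w (g i))) =
      ∏ k, complexOfPair (w k) ^ Fintype.card {i // f i = k} *
        conj (complexOfPair (w k)) ^ Fintype.card {i // g i = k} := by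
  have aux : ∀ (h : ι → κ) (F : κ → ℂ), ∏ i, F (h i) = ∏ k, F k ^ Fintype.card {i // h i = k} := by
    intro h F
    rw [← Finset.prod_fiberwise Finset.univ h]
    refine Finset.prod_congr rfl fun k _ => ?_
    rw [Fintype.card_subtype]
    refine Finset.prod_eq_pow_card fun i hi => ?_
    rw [(Finset.mem_filter.mp hi).2]
  rw [Finset.prod_mul_distrib, Finset.prod_mul_distrib, aux f fun k => complexOfPair (w k),
    aux g fun k => conj (complexOfPair (w k))]

lemma integrable_prod_complexOfPair (f g : ι → κ) :
    Integrable (fun w : κ → ℝ × ℝ => ∏ i, complexOfPair (w (f i)) * conj (complexOfPair (w (g i))))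
      (Measure.pi fun _ => (gaussianReal 0 1).prod (gaussianReal 0 1)) := by
  simp_rw [prod_complexOfPair_eq_prod_pow]
  exact Integrable.fintype_prod fun k => integrable_complexOfPair_pow_mul_conj_pow _ _

lemma integral_prod_complexOfPair [DecidableEq ι] (f g : ι → κ) :
    ∫ w : κ → ℝ × ℝ, ∏ i, complexOfPair (w (f i)) * conj (complexOfPair (w (g i)))
        ∂(Measure.pi fun _ => (gaussianReal 0 1).prod (gaussianReal 0 1)) =
      2 ^ Fintype.card ι * ∑ σ : Equiv.Perm ι, if f ∘ σ = g then 1 else 0 := by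
  have hcard : ∑ k, Fintype.card {i // f i = k} = Fintype.card ι := by
    rw [← Fintype.card_sigma]
    exact Fintype.card_congr (Equiv.sigmaFiberEquiv f)
  simp_rw [prod_complexOfPair_eq_prod_pow]
  rw [integral_fintype_prod_eq_prod (fun k (p : ℝ × ℝ) =>
      complexOfPair p ^ Fintype.card {i // f i = k} *
      conj (complexOfPair p) ^ Fintype.card {i // g i = k})]
  simp_rw [integral_complexOfPair_pow_mul_conj_pow]
  rw [Finset.sum_boole, ← Fintype.card_subtype, ← card_perm_comp_eq, ← hcard,
    ← Finset.prod_pow_eq_pow_sum, Nat.cast_prod, ← Finset.prod_mul_distrib]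
  refine Finset.prod_congr rfl fun k _ => ?_
  split_ifs <;> simp

end

section

variable {ι κ : Type*} [Fintype ι] [DecidableEq ι] [Fintype κ]

lemma prod_normSq_sum_eq (A : Matrix ι κ ℝ) (w : κ → ℝ × ℝ) :
    ((∏ i, Complex.normSq (∑ k, A i k * complexOfPair (w k)) : ℝ) : ℂ) =
      ∑ f : ι → κ, ∑ g : ι → κ, ((∏ i, A i (f i) * A i (g i) : ℝ) : ℂ) *
        ∏ i, complexOfPair (w (f i)) * conj (complexOfPair (w (g i))) := by
  push_cast
  simp_rw [← Complex.mul_conj, map_sum, map_mul, Complex.conj_ofReal]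
  rw [Finset.prod_mul_distrib, Finset.prod_univ_sum, Finset.prod_univ_sum, Finset.sum_mul_sum]
  simp only [Fintype.piFinset_univ, Finset.prod_mul_distrib]
  refine Finset.sum_congr rfl fun f _ => Finset.sum_congr rfl fun g _ => ?_
  ring

lemma integrable_prod_normSq (A : Matrix ι κ ℝ) :
    Integrable (fun w : κ → ℝ × ℝ => ∏ i, Complex.normSq (∑ k, A i k * complexOfPair (w k)))
      (Measure.pi fun _ => (gaussianReal 0 1).prod (gaussianReal 0 1)) := by
  classical
  refine (Integrable.congr ?_ (ae_of_all _ fun w => (prod_normSq_sum_eq A w).symm) :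
    Integrable (fun w => ((_ : ℝ) : ℂ)) _).re
  exact integrable_finsetSum _ fun f _ => integrable_finsetSum _ fun g _ =>
    (integrable_prod_complexOfPair f g).const_mul _

/-- The product of squared moduli of the coordinates of a circular Gaussian vector has the
permanent of the covariance matrix as its expectation. -/
lemma integral_prod_normSq (A : Matrix ι κ ℝ) :
    ∫ w : κ → ℝ × ℝ, ∏ i, Complex.normSq (∑ k, A i k * complexOfPair (w k))
        ∂(Measure.pi fun _ => (gaussianReal 0 1).prod (gaussianReal 0 1)) =
      2 ^ Fintype.card ι * ∑ σ : Equiv.Perm ι, ∏ i, (A * A.transpose) i (σ i) := by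
  classical
  apply Complex.ofReal_injective
  rw [← integral_complex_ofReal]
  simp_rw [prod_normSq_sum_eq]
  rw [integral_finsetSum _ fun f _ => integrable_finsetSum _ fun g _ =>
    (integrable_prod_complexOfPair f g).const_mul _]
  simp_rw [integral_finsetSum Finset.univ fun g _ =>
    (integrable_prod_complexOfPair _ g).const_mul _, integral_const_mul,
    integral_prod_complexOfPair]
  have hsum : ∀ f : ι → κ, ∑ g : ι → κ, ((∏ i, A i (f i) * A i (g i) : ℝ) : ℂ) *
      (2 ^ Fintype.card ι * ∑ σ : Equiv.Perm ι, if f ∘ σ = g then 1 else 0) =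
      ((2 ^ Fintype.card ι * ∑ σ : Equiv.Perm ι, ∏ i, A i (f i) * A i (f (σ i)) : ℝ) : ℂ) := by
    intro f
    simp_rw [Finset.mul_sum]
    rw [Finset.sum_comm]
    push_cast
    refine Finset.sum_congr rfl fun σ _ => ?_
    rw [Finset.sum_eq_single (f ∘ σ)]
    · simp [mul_comm]
    · intro g _ hg
      simp [Ne.symm hg]
    · simp
  simp_rw [hsum]
  rw [← Complex.ofReal_sum, ← Finset.mul_sum, Finset.sum_comm]
  congr 2
  rw [← Equiv.sum_comp (Equiv.inv (Equiv.Perm ι))]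
  refine Finset.sum_congr rfl fun σ _ => ?_
  simp_rw [Matrix.mul_apply, Matrix.transpose_apply]
  rw [Finset.prod_univ_sum, Fintype.piFinset_univ]
  refine Finset.sum_congr rfl fun f _ => ?_
  rw [Finset.prod_mul_distrib, Finset.prod_mul_distrib]
  congr 1
  rw [← Equiv.prod_comp σ]
  simp

end

lemma posSemidef_of_eq_integral_mul {Ω ι : Type*} [MeasurableSpace Ω] [Fintype ι] {P : Measure Ω}
    {X : ι → Ω → ℝ} (hX : ∀ i, MemLp (X i) 2 P) {S : Matrix ι ι ℝ}
    (hS : ∀ i j, S i j = ∫ ω, X i ω * X j ω ∂P) : S.PosSemidef := by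
  refine .of_dotProduct_mulVec_nonneg ?_ fun c => ?_
  · ext i j
    simp [hS, mul_comm]
  · have hint : ∀ i j, Integrable (fun ω => c i * (X i ω * X j ω) * c j) P := fun i j =>
      (((hX i).integrable_mul (hX j)).const_mul (c i)).mul_const (c j)
    have : star c ⬝ᵥ S.mulVec c = ∫ ω, (∑ i, c i * X i ω) ^ 2 ∂P := by
      have hexp : ∀ ω, (∑ i, c i * X i ω) ^ 2 = ∑ i, ∑ j, c i * (X i ω * X j ω) * c j := by
        intro ω
        rw [sq, Finset.sum_mul_sum]
        refine Finset.sum_congr rfl fun i _ => Finset.sum_congr rfl fun j _ => by ring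
      simp_rw [hexp]
      rw [integral_finsetSum _ fun i _ => integrable_finsetSum _ fun j _ => hint i j]
      simp_rw [integral_finsetSum Finset.univ fun j _ => hint _ j, integral_mul_const,
        integral_const_mul, ← hS]
      simp [dotProduct, Matrix.mulVec, Finset.mul_sum, mul_assoc]
    rw [this]
    positivity

lemma map_toLp_eq_multivariateGaussian {Ω ι : Type*} [MeasurableSpace Ω] [Fintype ι]
    [DecidableEq ι] {P : Measure Ω} [IsProbabilityMeasure P] {X : ι → Ω → ℝ}
    (hX : ∀ i, Measurable (X i)) {S : Matrix ι ι ℝ} (hS : S.PosSemidef)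
    (hGauss : ∀ c : ι → ℝ, P.map (fun ω => ∑ i, c i * X i ω) =
      gaussianReal 0 (Real.toNNReal (∑ i, ∑ j, c i * c j * S i j))) :
    P.map (fun ω => WithLp.toLp 2 fun i => X i ω) = multivariateGaussian 0 S := by
  have hm : Measurable fun ω => WithLp.toLp 2 fun i => X i ω := by fun_prop
  have : IsProbabilityMeasure (P.map fun ω => WithLp.toLp 2 fun i => X i ω) :=
    Measure.isProbabilityMeasure_map hm.aemeasurable
  refine Measure.ext_of_charFun (funext fun t => ?_)
  have hquad : ∑ i, ∑ j, t i * t j * S i j = t.ofLp ⬝ᵥ S.mulVec t.ofLp := by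
    simp only [dotProduct, Matrix.mulVec, Finset.mul_sum]
    refine Finset.sum_congr rfl fun i _ => Finset.sum_congr rfl fun j _ => by ring
  have hnonneg : 0 ≤ t.ofLp ⬝ᵥ S.mulVec t.ofLp := by
    simpa using hS.dotProduct_mulVec_nonneg t.ofLp
  have h1 : charFun (P.map fun ω => WithLp.toLp 2 fun i => X i ω) t =
      charFun (P.map fun ω => ∑ i, t i * X i ω) 1 := by
    rw [charFun_apply, charFun_apply, integral_map hm.aemeasurable (by fun_prop),
      integral_map (by fun_prop) (by fun_prop)]
    refine integral_congr_ae (ae_of_all _ fun ω => ?_)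
    simp [PiLp.inner_apply]
  rw [h1, hGauss, charFun_gaussianReal, charFun_multivariateGaussian hS, hquad,
    Real.coe_toNNReal _ hnonneg]
  simp

lemma multivariateGaussian_zero_eq_map_pi {ι : Type*} [Fintype ι] [DecidableEq ι]
    (S : Matrix ι ι ℝ) :
    multivariateGaussian 0 S = (Measure.pi fun _ : ι => gaussianReal 0 1).map
      fun x => WithLp.toLp 2 ((CFC.sqrt S).mulVec x) := by
  rw [multivariateGaussian, ← map_pi_eq_stdGaussian, Measure.map_map (by fun_prop) (by fun_prop)]
  congr 1
  ext x
  simp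

lemma normSq_sum_mul_complexOfPair {κ : Type*} [Fintype κ] (c : κ → ℝ) (w : κ → ℝ × ℝ) :
    Complex.normSq (∑ k, c k * complexOfPair (w k)) =
      (∑ k, c k * (w k).1) ^ 2 + (∑ k, c k * (w k).2) ^ 2 := by
  rw [Complex.normSq_apply, Complex.re_sum, Complex.im_sum]
  simp [complexOfPair, sq]

/-- A linear image of a standard Gaussian vector satisfies the absolute product bound. -/
lemma sq_integral_prod_abs_mulVec_le {ι κ : Type*} [Fintype ι] [DecidableEq ι] [Fintype κ]
    (A : Matrix ι κ ℝ) :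
    (∫ x, ∏ i, |A.mulVec x i| ∂(Measure.pi fun _ : κ => gaussianReal 0 1)) ^ 2 ≤
      ∑ σ : Equiv.Perm ι, ∏ i, (A * A.transpose) i (σ i) := by
  rw [sq, ← integral_prod_mul (fun x => ∏ i, |A.mulVec x i|) fun x => ∏ i, |A.mulVec x i|,
    ← (measurePreserving_arrowProdEquivProdArrow ℝ ℝ κ (fun _ => gaussianReal 0 1)
      (fun _ => gaussianReal 0 1)).integral_comp (MeasurableEquiv.measurableEmbedding _)]
  have hC := integral_prod_normSq A
  rw [← inv_mul_eq_iff_eq_mul₀ (by positivity), ← integral_const_mul] at hC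
  rw [← hC]
  refine integral_mono_of_nonneg (ae_of_all _ fun w => ?_)
    ((integrable_prod_normSq A).const_mul _) (ae_of_all _ fun w => ?_)
  · exact mul_nonneg (Finset.prod_nonneg fun _ _ => abs_nonneg _)
      (Finset.prod_nonneg fun _ _ => abs_nonneg _)
  · simp only [← Finset.prod_mul_distrib]
    rw [← inv_pow, Fintype.card, ← Finset.prod_const, ← Finset.prod_mul_distrib]
    refine Finset.prod_le_prod (fun _ _ => by positivity) fun i _ => ?_
    rw [normSq_sum_mul_complexOfPair]
    change |∑ k, A i k * (w k).1| * |∑ k, A i k * (w k).2| ≤ _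
    nlinarith [sq_nonneg (|∑ k, A i k * (w k).1| - |∑ k, A i k * (w k).2|),
      sq_abs (∑ k, A i k * (w k).1), sq_abs (∑ k, A i k * (w k).2)]

/-- **Li–Wei inequality.** If `(X_1,…,X_n)` is a centered jointly Gaussian vector
(i.e. every linear combination `Σ c_i X_i` has a centered Gaussian law with the variance induced
by the covariance matrix `Σ`), then `E[|X_1| ⋯ |X_n|] ≤ √(perm Σ)`. -/
theorem gaussian_abs_prod_le_sqrt_permanent
    {Ω : Type*} [MeasurableSpace Ω] (P : Measure Ω) [IsProbabilityMeasure P]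
    (n : ℕ) (hn : 1 ≤ n) (X : Fin n → Ω → ℝ) (hX : ∀ i, Measurable (X i))
    (Cov : Matrix (Fin n) (Fin n) ℝ)
    (hcov : ∀ i j, Cov i j = ∫ ω, X i ω * X j ω ∂P)
    (hGauss : ∀ c : Fin n → ℝ,
      P.map (fun ω => ∑ i, c i * X i ω) =
        ProbabilityTheory.gaussianReal 0
          (Real.toNNReal (∑ i, ∑ j, c i * c j * Cov i j))) :
    (∫ ω, ∏ i, |X i ω| ∂P) ≤ Real.sqrt (matrixPermanent Cov) := by
  have hmem : ∀ i, MemLp (X i) 2 P := by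
    intro i
    have h := hGauss (Pi.single i 1)
    have hsum : (fun ω => ∑ j, (Pi.single i 1 : Fin n → ℝ) j * X j ω) = X i := by
      funext ω
      simp [Pi.single_apply]
    rw [hsum] at h
    refine (memLp_map_measure_iff (g := id) (by fun_prop) (hX i).aemeasurable).mp ?_
    rw [h]
    exact memLp_id_gaussianReal' 2 (by simp)
  have hpsd : Cov.PosSemidef := posSemidef_of_eq_integral_mul hmem hcov
  have hlaw := (map_toLp_eq_multivariateGaussian hX hpsd hGauss).trans
    (multivariateGaussian_zero_eq_map_pi Cov)
  have hsqrt : CFC.sqrt Cov * (CFC.sqrt Cov).transpose = Cov := by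
    have hherm : (CFC.sqrt Cov).IsHermitian := (CFC.sqrt_nonneg Cov).isSelfAdjoint
    rw [← Matrix.conjTranspose_eq_transpose_of_trivial, hherm.eq]
    exact CFC.sqrt_mul_sqrt_self Cov hpsd.nonneg
  have hint : ∫ ω, ∏ i, |X i ω| ∂P =
      ∫ x, ∏ i, |(CFC.sqrt Cov).mulVec x i| ∂(Measure.pi fun _ : Fin n => gaussianReal 0 1) := by
    have h := congrArg (fun μ => ∫ v : EuclideanSpace ℝ (Fin n), ∏ i, |v i| ∂μ) hlaw
    simp only at h
    rwa [integral_map (by fun_prop) (by fun_prop), integral_map (by fun_prop) (by fun_prop)] at h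
  rw [hint]
  refine Real.le_sqrt_of_sq_le ?_
  have hle := sq_integral_prod_abs_mulVec_le (CFC.sqrt Cov)
  rwa [hsqrt] at hle
end
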